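/- arXiv:2301.07317 — 4 statements merged into one kernel-verified Lean document; each statement's English description precedes it below -/
import Mathlib

section
/- Let C, r be positive integers with r ≤ C, let K = C(C,r) (binomial coefficient), let F > 0 and M ≥ 0 be real numbers, and let Ω be a finite probability space carrying random variables W (taking values in a finite set), X, and Z_1, …, Z_C (each taking values in finite sets). Suppose: (i) H(W) = K·F; (ii) H(W | (X, Z_1, …, Z_C)) = 0 (decodability); (iii) I(W ; X) = 0 (security); (iv) H(Z_c) ≤ M·F for every c ∈ [C]. Then M ≥ C(C,r)/C. -/
/-- Probability of an event `E` under the probability mass function `μ`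
on a finite sample space `Ω`. -/
noncomputable def prob {Ω : Type*} [Fintype Ω] (μ : Ω → ℝ) (E : Set Ω) : ℝ :=
  ∑ ω, E.indicator μ ω

/-- Shannon entropy (in bits) of a discrete random variable `Y` with respect to the
probability mass function `μ` on the finite sample space `Ω`. -/
noncomputable def entropy {Ω α : Type*} [Fintype Ω] [Fintype α] (μ : Ω → ℝ) (Y : Ω → α) : ℝ :=
  - ∑ a : α, prob μ {ω | Y ω = a} * Real.logb 2 (prob μ {ω | Y ω = a})

/-- Conditional entropy `H(Y | X) = H(Y, X) - H(X)`. -/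
noncomputable def condEntropy {Ω α β : Type*} [Fintype Ω] [Fintype α] [Fintype β]
    (μ : Ω → ℝ) (Y : Ω → α) (X : Ω → β) : ℝ :=
  entropy μ (fun ω => (Y ω, X ω)) - entropy μ X

/-- Mutual information `I(Y ; X) = H(Y) + H(X) - H(Y, X)`. -/
noncomputable def mutualInfo {Ω α β : Type*} [Fintype Ω] [Fintype α] [Fintype β]
    (μ : Ω → ℝ) (Y : Ω → α) (X : Ω → β) : ℝ :=
  entropy μ Y + entropy μ X - entropy μ (fun ω => (Y ω, X ω))

/-- A sum weighted by the law of `Y` is an expectation over the sample space. -/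
theorem sum_prob_mul {Ω α : Type*} [Fintype Ω] [Fintype α] (μ : Ω → ℝ) (Y : Ω → α)
    (f : α → ℝ) : ∑ a, prob μ {ω | Y ω = a} * f a = ∑ ω, μ ω * f (Y ω) := by
  classical
  simp only [prob, Finset.sum_mul]
  rw [Finset.sum_comm]
  refine Finset.sum_congr rfl fun ω _ => ?_
  simp [Set.indicator_apply, ite_mul]

theorem sum_prob_fiber {Ω α : Type*} [Fintype Ω] [Fintype α] (μ : Ω → ℝ) (Y : Ω → α) :
    ∑ a, prob μ {ω | Y ω = a} = ∑ ω, μ ω := by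
  simpa using sum_prob_mul μ Y 1

theorem prob_nonneg {Ω : Type*} [Fintype Ω] {μ : Ω → ℝ} (hμ : ∀ ω, 0 ≤ μ ω) (E : Set Ω) :
    0 ≤ prob μ E :=
  Finset.sum_nonneg fun ω _ => Set.indicator_nonneg (fun ω _ => hμ ω) ω

theorem prob_mono {Ω : Type*} [Fintype Ω] {μ : Ω → ℝ} (hμ : ∀ ω, 0 ≤ μ ω) {E E' : Set Ω}
    (h : E ⊆ E') : prob μ E ≤ prob μ E' :=
  Finset.sum_le_sum fun ω _ => Set.indicator_le_indicator_of_subset h hμ ω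

theorem prob_pos {Ω : Type*} [Fintype Ω] {μ : Ω → ℝ} (hμ : ∀ ω, 0 ≤ μ ω) {E : Set Ω} {ω : Ω}
    (hω : 0 < μ ω) (hE : ω ∈ E) : 0 < prob μ E :=
  Finset.sum_pos' (fun ω _ => Set.indicator_nonneg (fun ω _ => hμ ω) ω)
    ⟨ω, Finset.mem_univ ω, by simpa [hE] using hω⟩

theorem entropy_eq_sum {Ω α : Type*} [Fintype Ω] [Fintype α] (μ : Ω → ℝ) (Y : Ω → α) :
    entropy μ Y = -∑ ω, μ ω * Real.logb 2 (prob μ {ω' | Y ω' = Y ω}) := by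
  rw [entropy, sum_prob_mul μ Y fun a => Real.logb 2 (prob μ {ω | Y ω = a})]

/-- Entropy does not increase under a function of the random variable. -/
theorem entropy_comp_le {Ω α β : Type*} [Fintype Ω] [Fintype α] [Fintype β] {μ : Ω → ℝ}
    (hμ : ∀ ω, 0 ≤ μ ω) (Y : Ω → α) (g : α → β) :
    entropy μ (fun ω => g (Y ω)) ≤ entropy μ Y := by
  rw [entropy_eq_sum, entropy_eq_sum]
  refine neg_le_neg (Finset.sum_le_sum fun ω _ => ?_)
  rcases (hμ ω).eq_or_lt with h | h
  · simp [← h]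
  · refine mul_le_mul_of_nonneg_left ?_ h.le
    refine Real.logb_le_logb_of_le one_lt_two (prob_pos hμ h rfl) (prob_mono hμ fun ω' h' => ?_)
    exact congrArg g h'

/-- Gibbs' inequality: entropy is at most the cross entropy relative to a subprobability `q`. -/
theorem entropy_le_cross {Ω α : Type*} [Fintype Ω] [Fintype α] {μ : Ω → ℝ}
    (hμ : ∀ ω, 0 ≤ μ ω) (hμ1 : ∑ ω, μ ω = 1) (Y : Ω → α) {q : α → ℝ} (hq : ∀ a, 0 ≤ q a)
    (hq1 : ∑ a, q a ≤ 1) (hpos : ∀ ω, 0 < μ ω → 0 < q (Y ω)) :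
    entropy μ Y ≤ -∑ ω, μ ω * Real.logb 2 (q (Y ω)) := by
  set p : α → ℝ := fun a => prob μ {ω | Y ω = a}
  have hratio : ∑ ω, μ ω * (q (Y ω) / p (Y ω)) ≤ 1 := by
    rw [← sum_prob_mul μ Y fun a => q a / p a]
    refine (Finset.sum_le_sum fun a _ => ?_).trans hq1
    change p a * (q a / p a) ≤ q a
    rcases eq_or_ne (p a) 0 with h | h
    · simpa [h] using hq a
    · rw [mul_div_cancel₀ _ h]
  have hlog : ∑ ω, μ ω * (Real.log (q (Y ω)) - Real.log (p (Y ω))) ≤ 0 := by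
    calc ∑ ω, μ ω * (Real.log (q (Y ω)) - Real.log (p (Y ω)))
        ≤ ∑ ω, (μ ω * (q (Y ω) / p (Y ω)) - μ ω) := by
          refine Finset.sum_le_sum fun ω _ => ?_
          rcases (hμ ω).eq_or_lt with h | h
          · simp [← h]
          · have hpω : 0 < p (Y ω) := prob_pos hμ h rfl
            rw [← Real.log_div (hpos ω h).ne' hpω.ne', ← mul_sub_one]
            exact mul_le_mul_of_nonneg_left
              (Real.log_le_sub_one_of_pos (div_pos (hpos ω h) hpω)) h.le
      _ ≤ 0 := by rw [Finset.sum_sub_distrib, hμ1]; linarith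
  rw [entropy_eq_sum]
  simp only [Real.logb, mul_sub, Finset.sum_sub_distrib, ← mul_div_assoc, ← Finset.sum_div]
    at hlog ⊢
  exact neg_le_neg (div_le_div_of_nonneg_right (sub_nonpos.mp hlog) (Real.log_pos one_lt_two).le)

/-- Subadditivity of entropy for a random variable together with a finite family. -/
theorem entropy_prod_pi_le {Ω ι 𝒳 : Type*} [Fintype Ω] [Fintype ι] [DecidableEq ι] [Fintype 𝒳]
    {ζ : ι → Type*} [∀ i, Fintype (ζ i)] {μ : Ω → ℝ}
    (hμ : ∀ ω, 0 ≤ μ ω) (hμ1 : ∑ ω, μ ω = 1) (X : Ω → 𝒳) (Z : (i : ι) → Ω → ζ i) :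
    entropy μ (fun ω => (X ω, fun i => Z i ω)) ≤ entropy μ X + ∑ i, entropy μ (Z i) := by
  let q : 𝒳 × ((i : ι) → ζ i) → ℝ := fun a =>
    prob μ {ω | X ω = a.1} * ∏ i, prob μ {ω | Z i ω = a.2 i}
  have hq1 : ∑ a, q a ≤ 1 := by
    simp only [q, Fintype.sum_prod_type, ← Finset.mul_sum]
    rw [← Fintype.piFinset_univ,
      ← Finset.prod_univ_sum (fun i => (Finset.univ : Finset (ζ i)))
        fun i z => prob μ {ω | Z i ω = z}]
    simp [sum_prob_fiber, hμ1]
  have hX {ω : Ω} (h : 0 < μ ω) : 0 < prob μ {ω' | X ω' = X ω} := prob_pos hμ h rfl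
  have hZ {ω : Ω} (h : 0 < μ ω) (i : ι) : 0 < prob μ {ω' | Z i ω' = Z i ω} := prob_pos hμ h rfl
  refine (entropy_le_cross hμ hμ1 (fun ω => (X ω, fun i => Z i ω)) (q := q) (fun a => mul_nonneg (prob_nonneg hμ _)
    (Finset.prod_nonneg fun i _ => prob_nonneg hμ _)) hq1 fun ω h => mul_pos (hX h)
      (Finset.prod_pos fun i _ => hZ h i)).trans_eq ?_
  simp only [entropy_eq_sum, Finset.sum_neg_distrib]
  rw [Finset.sum_comm, ← neg_add, ← Finset.sum_add_distrib]
  refine congrArg Neg.neg (Finset.sum_congr rfl fun ω _ => ?_)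
  rcases (hμ ω).eq_or_lt with h | h
  · simp [← h]
  · simp only [q]
    rw [Real.logb_mul (hX h).ne' (Finset.prod_pos fun i _ => hZ h i).ne',
      Real.logb_prod _ _ fun i _ => (hZ h i).ne', mul_add, Finset.mul_sum]

/-- **Proposition 1**: for a secure multi-access coded caching scheme with distinct
demands, the cache memory satisfies `M ≥ C(C,r)/C`.  Here `W` is the tuple of
`K = C(C,r)` distinct demanded files (of `F` bits each, so `H(W) = K·F`), `X` is the
server transmission and `Z c` is the content of cache `c`, of size at most `M·F` bits. -/
theorem secure_multiaccess_memory_lower_bound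
    (C r : ℕ) (hC : 0 < C) (hr : 0 < r) (hrC : r ≤ C)
    (F M : ℝ) (hF : 0 < F) (hM : 0 ≤ M)
    {Ω : Type*} [Fintype Ω] (μ : Ω → ℝ)
    (hμ0 : ∀ ω, 0 ≤ μ ω) (hμ1 : ∑ ω, μ ω = 1)
    {𝒲 𝒳 : Type*} [Fintype 𝒲] [Fintype 𝒳]
    {ζ : Fin C → Type*} [∀ c, Fintype (ζ c)]
    (W : Ω → 𝒲) (X : Ω → 𝒳) (Z : (c : Fin C) → Ω → ζ c)
    (hHW : entropy μ W = (C.choose r : ℝ) * F)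
    (hdec : condEntropy μ W (fun ω => (X ω, fun c => Z c ω)) = 0)
    (hsec : mutualInfo μ W X = 0)
    (hZ : ∀ c, entropy μ (Z c) ≤ M * F) :
    M ≥ (C.choose r : ℝ) / C := by
  have hmono : entropy μ (fun ω => (W ω, X ω)) ≤
      entropy μ (fun ω => (W ω, (X ω, fun c => Z c ω))) :=
    entropy_comp_le hμ0 (fun ω => (W ω, (X ω, fun c => Z c ω))) fun a => (a.1, a.2.1)
  have hsub := entropy_prod_pi_le hμ0 hμ1 X Z
  have hsum : ∑ c, entropy μ (Z c) ≤ C * (M * F) := by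
    simpa using Finset.sum_le_card_nsmul Finset.univ _ _ fun c _ => hZ c
  rw [condEntropy] at hdec
  rw [mutualInfo] at hsec
  have hkey : (C.choose r : ℝ) * F ≤ M * C * F := by linarith
  rw [ge_iff_le, div_le_iff₀ (by exact_mod_cast hC)]
  exact le_of_mul_le_mul_right hkey hF
end

section
/- Let C, r be positive integers with r ≤ C, let K = C(C,r), and let N be a real number with N ≥ 2·K·r. Define R* = K − (K²·r/N)·(1 − (C − r)/(C·(r + 1))). Then R* > 0 and K / R* ≤ 2. -/
/-- **Theorem 6, part 1**: with `K = C(C,r)` and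
`R* = K − (K²·r/N)·(1 − (C − r)/(C·(r + 1)))` the optimal rate under uncoded placement
at memory point `M = r·C(C,r)/C`, if `N ≥ 2·K·r` then `R* > 0` and `K / R* ≤ 2`;
i.e., the SP-LFR scheme is within a multiplicative factor `2` of the optimum. -/
theorem sp_lfr_gap (C r : ℕ) (hC : 0 < C) (hr : 0 < r) (hrC : r ≤ C)
    (N : ℝ) (hN : N ≥ 2 * (C.choose r : ℝ) * r) :
    0 < (C.choose r : ℝ) -
        ((C.choose r : ℝ) ^ 2 * r / N) * (1 - ((C : ℝ) - r) / ((C : ℝ) * (r + 1))) ∧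
    (C.choose r : ℝ) /
        ((C.choose r : ℝ) -
          ((C.choose r : ℝ) ^ 2 * r / N) * (1 - ((C : ℝ) - r) / ((C : ℝ) * (r + 1)))) ≤ 2 := by
  have hK : (0 : ℝ) < C.choose r := by exact_mod_cast Nat.choose_pos hrC
  have hr' : (0 : ℝ) < r := by exact_mod_cast hr
  have hrC' : (r : ℝ) ≤ C := by exact_mod_cast hrC
  have hN0 : 0 < N := lt_of_lt_of_le (by positivity) hN
  have hfrac : 0 ≤ ((C : ℝ) - r) / ((C : ℝ) * (r + 1)) :=
    div_nonneg (sub_nonneg.2 hrC') (by positivity)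
  have hhalf : (C.choose r : ℝ) ^ 2 * r / N ≤ C.choose r / 2 := by
    rw [div_le_div_iff₀ hN0 two_pos]
    nlinarith [mul_le_mul_of_nonneg_left hN hK.le]
  have hcoef : 0 ≤ (C.choose r : ℝ) ^ 2 * r / N := by positivity
  have hprod := mul_le_of_le_one_right hcoef (sub_le_self 1 hfrac)
  have hpos : 0 < (C.choose r : ℝ) -
      ((C.choose r : ℝ) ^ 2 * r / N) * (1 - ((C : ℝ) - r) / ((C : ℝ) * (r + 1))) := by
    linarith
  refine ⟨hpos, ?_⟩
  rw [div_le_iff₀ hpos]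
  linarith
end

section
/- Let F be a finite field, let k ≥ 1, and let x_1, …, x_k be k pairwise distinct nonzero elements of F. For a secret D ∈ F and a coefficient vector a = (a_1, …, a_{k−1}) ∈ F^{k−1}, define the shares s_j(D, a) = D + Σ_{i=1}^{k−1} a_i · x_j^i for j = 1, …, k. If (D, a) and (D′, a′) produce the same shares, i.e., s_j(D, a) = s_j(D′, a′) for all j ∈ {1, …, k}, then D = D′ and a = a′. In particular, the secret D is uniquely reconstructable from all k shares. -/
/-- **Reconstruction property of Shamir's secret sharing**: let `x 0, …, x (k-1)` be
`k` pairwise distinct nonzero elements of a finite field `F`.  The shares of a secret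
`D` with coefficient vector `a ∈ F^(k-1)` are `s j = D + ∑ i, a i · (x j)^(i+1)`,
i.e. the evaluations of the polynomial `q(X) = D + a_1 X + ⋯ + a_{k−1} X^{k−1}` at the
`k` points.  If two pairs `(D, a)` and `(D', a')` produce the same `k` shares, then
`D = D'` and `a = a'`; in particular the secret is uniquely reconstructable from all
`k` shares. -/
theorem shamir_reconstruction {F : Type*} [Field F] [Fintype F]
    (k : ℕ) (hk : 1 ≤ k)
    (x : Fin k → F) (hx_inj : Function.Injective x) (hx_ne : ∀ j, x j ≠ 0)
    (D D' : F) (a a' : Fin (k - 1) → F)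
    (h : ∀ j : Fin k,
      D + ∑ i : Fin (k - 1), a i * x j ^ ((i : ℕ) + 1) =
      D' + ∑ i : Fin (k - 1), a' i * x j ^ ((i : ℕ) + 1)) :
    D = D' ∧ a = a' := by
  obtain ⟨n, rfl⟩ : ∃ n, k = n + 1 := ⟨k - 1, by omega⟩
  change Fin n → F at a a'
  have hzero : Fin.cons D a - Fin.cons D' a' = (0 : Fin (n + 1) → F) := by
    refine Matrix.eq_zero_of_forall_index_sum_mul_pow_eq_zero hx_inj fun j => ?_
    have hj : D + ∑ i : Fin n, a i * x j ^ ((i : ℕ) + 1) =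
        D' + ∑ i : Fin n, a' i * x j ^ ((i : ℕ) + 1) := h j
    simp only [Fin.sum_univ_succ, Pi.sub_apply, Fin.cons_zero, Fin.cons_succ, Fin.val_zero,
      Fin.val_succ, pow_zero, mul_one, sub_mul, Finset.sum_sub_distrib]
    linear_combination hj
  exact Fin.cons_inj.mp (sub_eq_zero.mp hzero)
end

section
/- Let F be a finite field, let k ≥ 2, and let x_1, …, x_{k−1} be k−1 pairwise distinct nonzero elements of F. For every fixed secret D ∈ F, the map from F^{k−1} to F^{k−1} sending a coefficient vector a = (a_1, …, a_{k−1}) to the share vector (D + Σ_{i=1}^{k−1} a_i · x_1^i, …, D + Σ_{i=1}^{k−1} a_i · x_{k−1}^i, ) restricted to its first k−1 outputs, i.e., a ↦ (q_a(x_1), …, q_a(x_{k−1})) where q_a(x) = D + Σ_{i=1}^{k−1} a_i x^i, is a bijection of F^{k−1}. Consequently, for each fixed vector of k−1 share values and each candidate secret D, there is exactly one coefficient vector a consistent with those shares, so when a is chosen uniformly at random from F^{k−1}, any k−1 shares are jointly uniform on F^{k−1} and statistically independent of the secret D. -/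
/-- **Secrecy property of Shamir's secret sharing**: let `x 0, …, x (k-2)` be `k − 1`
pairwise distinct nonzero elements of a finite field `F` and fix a secret `D ∈ F`.
The map sending a coefficient vector `a ∈ F^(k-1)` to the vector of the `k − 1` shares
`(q_a(x 0), …, q_a(x (k-2)))`, where `q_a(X) = D + a_1 X + ⋯ + a_{k−1} X^{k−1}`, is a
bijection of `F^(k-1)`.  Consequently, for each fixed vector of `k − 1` share values
and each candidate secret `D` there is exactly one consistent coefficient vector, so
when `a` is uniform on `F^(k-1)` any `k − 1` shares are jointly uniform and
statistically independent of `D`. -/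
theorem shamir_secrecy {F : Type*} [Field F] [Fintype F]
    (k : ℕ) (hk : 2 ≤ k)
    (x : Fin (k - 1) → F) (hx_inj : Function.Injective x) (hx_ne : ∀ j, x j ≠ 0)
    (D : F) :
    Function.Bijective
      (fun a : Fin (k - 1) → F =>
        (fun j : Fin (k - 1) => D + ∑ i : Fin (k - 1), a i * x j ^ ((i : ℕ) + 1))) ∧
    ∀ s : Fin (k - 1) → F,
      ∃! a : Fin (k - 1) → F,
        (fun j : Fin (k - 1) => D + ∑ i : Fin (k - 1), a i * x j ^ ((i : ℕ) + 1)) = s := by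
  have hbij : Function.Bijective (fun a : Fin (k - 1) → F =>
      (fun j : Fin (k - 1) => D + ∑ i : Fin (k - 1), a i * x j ^ ((i : ℕ) + 1))) := by
    refine Finite.injective_iff_bijective.mp fun a b hab => sub_eq_zero.mp ?_
    refine Matrix.eq_zero_of_forall_index_sum_mul_pow_eq_zero hx_inj fun j => ?_
    have hj : ∑ i, a i * x j ^ ((i : ℕ) + 1) = ∑ i, b i * x j ^ ((i : ℕ) + 1) :=
      add_left_cancel (congrFun hab j)
    refine (mul_eq_zero.mp ?_).resolve_right (hx_ne j)
    rw [Finset.sum_mul, ← sub_eq_zero.mpr hj, ← Finset.sum_sub_distrib]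
    refine Finset.sum_congr rfl fun i _ => ?_
    rw [Pi.sub_apply]
    ring
  exact ⟨hbij, hbij.existsUnique⟩
end
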